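/- Let (A,m) be a Noetherian local ring, a an ideal of A, and M a finitely generated A-module. Then a·Hom_A(M, a^n) = Hom_A(M, a^{n+1}) for all n ≫ 0 (here Hom_A(M, a^n) is identified with the submodule {f ∈ Hom_A(M,A) : f(M) ⊆ a^n} of Hom_A(M,A)). -/

import Mathlib

/-!
Evaluation at a finite generating family of `M` embeds `Hom_A(M, N)` into a finite power of `N`.
Under this embedding the filtration `Hom_A(M, F_n)` is the restriction of the componentwise
filtration, and by Artin-Rees a stable filtration stays stable when restricted to a submodule.
-/

set_option synthInstance.maxHeartbeats 1000000
set_option maxHeartbeats 1000000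

noncomputable section

open Polynomial IsLocalRing

/-- The dual filtration on `M* = Hom_A(M, A)`:
`M*_n = Hom_A(M, aⁿ) = {f : M →ₗ[A] A | f(M) ⊆ aⁿ}`. -/
def dualFiltration {A : Type} [CommRing A] (a : Ideal A)
    (M : Type) [AddCommGroup M] [Module A M] (n : ℕ) :
    Submodule A (M →ₗ[A] A) where
  carrier := {f | ∀ m, f m ∈ a ^ n}
  add_mem' := fun hf hg m => (a ^ n).add_mem (hf m) (hg m)
  zero_mem' := fun m => by simp
  smul_mem' := fun c f hf => by
    intro m
    simpa [smul_eq_mul] using Ideal.mul_mem_left _ c (hf m)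

/-- The dual filtration indexed by `ℤ` (with `aⁿ = A` for `n ≤ 0`). -/
def dualFiltrationZ {A : Type} [CommRing A] (a : Ideal A)
    (M : Type) [AddCommGroup M] [Module A M] (n : ℤ) :
    Submodule A (M →ₗ[A] A) :=
  dualFiltration a M n.toNat

section StableFiltrations

variable {R ι L P : Type*} [CommRing R] {I : Ideal R}
  [AddCommGroup L] [Module R L] [AddCommGroup P] [Module R P]
  {M : ι → Type*} [∀ i, AddCommGroup (M i)] [∀ i, Module R (M i)]

/-- The filtration induced by `F` along a linear map into the filtered module. -/
def comapFiltration (φ : L →ₗ[R] P) (F : I.Filtration P) : I.Filtration L where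
  N n := (F.N n).comap φ
  mono n := Submodule.comap_mono (F.mono n)
  smul_le n := (Submodule.smul_comap_le_comap_smul φ (F.N n) I).trans
    (Submodule.comap_mono (F.smul_le n))

theorem comapFiltration_stable [IsNoetherianRing R] [Module.Finite R P] {φ : L →ₗ[R] P}
    (hφ : Function.Injective φ) {F : I.Filtration P} (hF : F.Stable) :
    (comapFiltration φ F).Stable := by
  obtain ⟨n₀, hn₀⟩ := hF.inter_right (I.trivialFiltration φ.range)
  have comap_inf_range (Q : Submodule R P) : (Q ⊓ φ.range).comap φ = Q.comap φ := by
    ext x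
    simp
  refine ⟨n₀, fun n hn ↦ ?_⟩
  calc I • (F.N n).comap φ
      = I • (F.N n ⊓ φ.range).comap φ := by rw [comap_inf_range]
    _ = (I • (F.N n ⊓ φ.range)).comap φ := (Submodule.comap_smul'' hφ inf_le_right).symm
    _ = (F.N (n + 1) ⊓ φ.range).comap φ := congrArg (Submodule.comap φ) (hn₀ n hn)
    _ = (F.N (n + 1)).comap φ := comap_inf_range _

/-- The componentwise filtration on a product of filtered modules. -/
def piFiltration (F : ∀ i, I.Filtration (M i)) : I.Filtration (∀ i, M i) where
  N n := Submodule.pi Set.univ fun i ↦ (F i).N n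
  mono n := Submodule.pi_mono fun i _ ↦ (F i).mono n
  smul_le n := Submodule.smul_le.2 fun _ hr _ hx i hi ↦
    (F i).smul_le n (Submodule.smul_mem_smul hr (hx i hi))

theorem smul_pi_univ [Finite ι] (I : Ideal R) (p : ∀ i, Submodule R (M i)) :
    I • Submodule.pi Set.univ p = Submodule.pi Set.univ fun i ↦ I • p i := by
  classical
  simp only [← Submodule.iSup_map_single, Submodule.smul_iSup, Submodule.map_smul'']

theorem piFiltration_stable [Finite ι] {F : ∀ i, I.Filtration (M i)} (hF : ∀ i, (F i).Stable) :
    (piFiltration F).Stable := by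
  choose n₀ hn₀ using hF
  obtain ⟨k, hk⟩ := Finite.exists_le n₀
  refine ⟨k, fun n hn ↦ (smul_pi_univ I _).trans ?_⟩
  exact congrArg (Submodule.pi Set.univ) (funext fun i ↦ hn₀ i n ((hk i).trans hn))

end StableFiltrations

section HomFiltration

variable {R ι M N : Type*} [CommRing R] {I : Ideal R}
  [AddCommGroup M] [Module R M] [AddCommGroup N] [Module R N]

variable (M) in
/-- The filtration `n ↦ Hom(M, F n)` on `Hom(M, N)`, with `Hom(M, F n)` encoded as the linear maps
`M → N` that send all of `M` into `F n`. -/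
def homFiltration (F : I.Filtration N) : I.Filtration (M →ₗ[R] N) where
  N n := Submodule.compatibleMaps ⊤ (F.N n)
  mono n _ hf := hf.trans (Submodule.comap_mono (F.mono n))
  smul_le n := Submodule.smul_le.2 fun _ hr _ hf _ hm ↦
    F.smul_le n (Submodule.smul_mem_smul hr (hf hm))

variable (N) in
/-- Evaluation of linear maps `M → N` at a family `v` of elements of `M`. -/
def evalFamily (v : ι → M) : (M →ₗ[R] N) →ₗ[R] (ι → N) :=
  LinearMap.funLeft R N v ∘ₗ LinearMap.ltoFun R M N R

theorem evalFamily_injective {v : ι → M} (hv : Submodule.span R (Set.range v) = ⊤) :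
    Function.Injective (evalFamily (R := R) N v) :=
  fun _ _ h ↦ LinearMap.ext_on_range hv (congrFun h)

theorem homFiltration_eq_comapFiltration [Finite ι] {v : ι → M}
    (hv : Submodule.span R (Set.range v) = ⊤) (F : I.Filtration N) :
    homFiltration M F = comapFiltration (evalFamily N v) (piFiltration fun _ ↦ F) := by
  ext n f
  calc ⊤ ≤ (F.N n).comap f
      ↔ Submodule.span R (Set.range v) ≤ (F.N n).comap f := by rw [hv]
    _ ↔ ∀ i, f (v i) ∈ F.N n := Submodule.span_le.trans Set.range_subset_iff
    _ ↔ evalFamily N v f ∈ Submodule.pi Set.univ fun _ ↦ F.N n := Set.mem_univ_pi.symm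

theorem dual_filtration_stable_general [IsNoetherianRing R] [Module.Finite R M]
    [Module.Finite R N] {F : I.Filtration N} (hF : F.Stable) : (homFiltration M F).Stable := by
  obtain ⟨k, v, hv⟩ := Module.Finite.exists_fin (R := R) (M := M)
  rw [homFiltration_eq_comapFiltration hv]
  exact comapFiltration_stable (evalFamily_injective hv) (piFiltration_stable fun _ ↦ hF)

end HomFiltration

theorem homFiltration_stableFiltration_top {A : Type} [CommRing A] (a : Ideal A)
    (M : Type) [AddCommGroup M] [Module A M] (n : ℕ) :
    (homFiltration M (a.stableFiltration ⊤)).N n = dualFiltration a M n := by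
  ext f
  simp [homFiltration, dualFiltration, Submodule.compatibleMaps, SetLike.le_def]

/-- Let `(A, m)` be a Noetherian local ring, `a` an ideal of `A`, and `M` a finitely
generated `A`-module. Then `a·Hom_A(M, aⁿ) = Hom_A(M, aⁿ⁺¹)` for all `n ≫ 0`, where
`Hom_A(M, aⁿ)` is identified with the submodule `{f ∈ Hom_A(M, A) | f(M) ⊆ aⁿ}`. -/
theorem dual_filtration_stable
    (A : Type) [CommRing A] [IsLocalRing A] [IsNoetherianRing A] (a : Ideal A)
    (M : Type) [AddCommGroup M] [Module A M] [Module.Finite A M] :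
    ∃ N : ℕ, ∀ n : ℕ, N ≤ n → a • dualFiltration a M n = dualFiltration a M (n + 1) := by
  simpa only [Ideal.Filtration.Stable, homFiltration_stableFiltration_top] using
    dual_filtration_stable_general (M := M) (a.stableFiltration_stable (⊤ : Ideal A))
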